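/- arXiv:1810.13176 — 2 statements merged into one kernel-verified Lean document; each statement's English description precedes it below -/
import Mathlib

section
/- For every parameter p, the homogeneous component of N_p of lowest total degree is the component of degree M+N, and it equals N_p^{(M+N)}(x,y) = x·y^{M}·∏_{i=1}^{N−1}(y + a_{1,i}·x). Moreover, the homogeneous component of lowest total degree of the blown-up polynomial Ñ_p(x₁,y₁) = x₁·y₁·(y₁+x₁)·∏_{i=1}^{N−1}(y₁ + Σ_{k=1}^{i} a_{k,i}·x₁^{k−1}·y₁^{k−1})·∏_{i=1}^{M−2}(y₁ + Σ_{k=1}^{N−1+2i} b_{k,i}·x₁^{k}) is the component of degree M+1 (assuming all a_{1,i} ≠ 0), and it equals Ñ_p^{(M+1)}(x₁,y₁) = x₁·y₁·(y₁+x₁)·(∏_{j=1}^{N−1} a_{1,j})·∏_{i=1}^{M−2}(y₁ + b_{1,i}·x₁). -/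
open MvPolynomial

/-- The normal form `N_p` as a polynomial in `ℂ[x,y]`. -/
noncomputable def Npoly (M N : ℕ) (a b : ℕ → ℕ → ℂ) : MvPolynomial (Fin 2) ℂ :=
  X 0 * X 1 * (X 1 + X 0 ^ 2) *
    (∏ i ∈ Finset.Icc 1 (N - 1),
      (X 1 + ∑ k ∈ Finset.Icc 1 i, C (a k i) * X 0 * X 1 ^ (k - 1))) *
    (∏ i ∈ Finset.Icc 1 (M - 2),
      (X 1 + ∑ k ∈ Finset.Icc 1 (N - 1 + 2 * i), C (b k i) * X 0 ^ (k + 1)))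

/-- The blown-up polynomial `Ñ_p`. -/
noncomputable def Ntilde (M N : ℕ) (a b : ℕ → ℕ → ℂ) : MvPolynomial (Fin 2) ℂ :=
  X 0 * X 1 * (X 1 + X 0) *
    (∏ i ∈ Finset.Icc 1 (N - 1),
      (X 1 + ∑ k ∈ Finset.Icc 1 i, C (a k i) * X 0 ^ (k - 1) * X 1 ^ (k - 1))) *
    (∏ i ∈ Finset.Icc 1 (M - 2),
      (X 1 + ∑ k ∈ Finset.Icc 1 (N - 1 + 2 * i), C (b k i) * X 0 ^ k))

/-- `g` is homogeneous of degree `d` and `f - g` has only terms of degree `> d`. -/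
def LowForm (d : ℕ) (f g : MvPolynomial (Fin 2) ℂ) : Prop :=
  g.IsHomogeneous d ∧ f - g ∈ idealOfVars (Fin 2) ℂ ^ (d + 1)

lemma homog_mem_pow {d : ℕ} {g : MvPolynomial (Fin 2) ℂ} (h : g.IsHomogeneous d) :
    g ∈ idealOfVars (Fin 2) ℂ ^ d := by
  rw [mem_pow_idealOfVars_iff']
  intro x hx
  exact h.coeff_eq_zero hx.ne

lemma LowForm.mem {d : ℕ} {f g : MvPolynomial (Fin 2) ℂ} (h : LowForm d f g) :
    f ∈ idealOfVars (Fin 2) ℂ ^ d := by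
  have h1 := Ideal.add_mem _ (Ideal.pow_le_pow_right (Nat.le_succ d) h.2) (homog_mem_pow h.1)
  simpa using h1

lemma LowForm.of_homog {d : ℕ} {g : MvPolynomial (Fin 2) ℂ} (h : g.IsHomogeneous d) :
    LowForm d g g := ⟨h, by simp⟩

lemma LowForm.mul {d e : ℕ} {f g f' g' : MvPolynomial (Fin 2) ℂ} (h : LowForm d f g)
    (h' : LowForm e f' g') : LowForm (d + e) (f * f') (g * g') := by
  refine ⟨h.1.mul h'.1, ?_⟩
  have e1 : f * f' - g * g' = (f - g) * f' + g * (f' - g') := by ring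
  rw [e1]
  apply Ideal.add_mem
  · have := Ideal.mul_mem_mul h.2 h'.mem
    rw [← pow_add] at this
    convert this using 2
    ring
  · have := Ideal.mul_mem_mul (homog_mem_pow h.1) h'.2
    rw [← pow_add] at this
    exact this

lemma LowForm.prod (d : ℕ) (s : Finset ℕ) (f g : ℕ → MvPolynomial (Fin 2) ℂ)
    (h : ∀ i ∈ s, LowForm d (f i) (g i)) :
    LowForm (s.card * d) (∏ i ∈ s, f i) (∏ i ∈ s, g i) := by
  induction s using Finset.induction_on with
  | empty => simpa using LowForm.of_homog (isHomogeneous_one (Fin 2) ℂ)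
  | insert i s hi ih =>
    rw [Finset.prod_insert hi, Finset.prod_insert hi, Finset.card_insert_of_notMem hi]
    have := (h i (Finset.mem_insert_self i s)).mul
      (ih fun j hj => h j (Finset.mem_insert_of_mem hj))
    convert this using 1
    ring

lemma LowForm.comp {d : ℕ} {f g : MvPolynomial (Fin 2) ℂ} (h : LowForm d f g) :
    (∀ e, e < d → homogeneousComponent e f = 0) ∧ homogeneousComponent d f = g := by
  have h2 := (mem_pow_idealOfVars_iff' _ _).1 h.2
  have h3 := (mem_pow_idealOfVars_iff' _ _).1 h.mem
  constructor
  · intro e he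
    ext m
    rw [coeff_homogeneousComponent]
    split_ifs with hm
    · exact h3 m (by omega)
    · simp
  · ext m
    rw [coeff_homogeneousComponent]
    split_ifs with hm
    · have := h2 m (by omega)
      rw [coeff_sub] at this
      exact sub_eq_zero.1 this
    · exact (h.1.coeff_eq_zero hm).symm

lemma sum_tail (n D : ℕ) (hn : 1 ≤ n) (f : ℕ → MvPolynomial (Fin 2) ℂ)
    (hf : ∀ k, 2 ≤ k → f k ∈ idealOfVars (Fin 2) ℂ ^ D) :
    (∑ k ∈ Finset.Icc 1 n, f k) - f 1 ∈ idealOfVars (Fin 2) ℂ ^ D := by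
  rw [← Finset.add_sum_Ioc_eq_sum_Icc hn, add_sub_cancel_left]
  refine Ideal.sum_mem _ fun k hk => hf k ?_
  rw [Finset.mem_Ioc] at hk
  omega

lemma mono_mem (c : ℂ) (p q D : ℕ) (h : D ≤ p + q) :
    C c * X 0 ^ p * X 1 ^ q ∈ idealOfVars (Fin 2) ℂ ^ D := by
  apply Ideal.pow_le_pow_right h
  apply homog_mem_pow
  have := (isHomogeneous_C_mul_X_pow c (0 : Fin 2) p).mul
    (isHomogeneous_X_pow (R := ℂ) (1 : Fin 2) q)
  exact this

lemma lin_homog (c : ℂ) : (X 1 + C c * X 0 : MvPolynomial (Fin 2) ℂ).IsHomogeneous 1 :=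
  (isHomogeneous_X ℂ 1).add (isHomogeneous_C_mul_X c 0)

lemma lin_ne (c : ℂ) : (X 1 + C c * X 0 : MvPolynomial (Fin 2) ℂ) ≠ 0 := by
  intro h
  have := congrArg (eval (fun i : Fin 2 => if i = 0 then (0 : ℂ) else 1)) h
  simp at this

lemma low_a (a : ℕ → ℂ) (n : ℕ) (hn : 1 ≤ n) :
    LowForm 1 (X 1 + ∑ k ∈ Finset.Icc 1 n, C (a k) * X 0 * X 1 ^ (k - 1))
      (X 1 + C (a 1) * X 0) := by
  refine ⟨lin_homog _, ?_⟩
  have := sum_tail n 2 hn (fun k => C (a k) * X 0 * X 1 ^ (k - 1)) (fun k hk => by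
    simpa using mono_mem (a k) 1 (k - 1) 2 (by omega))
  simpa using this

lemma low_b (b : ℕ → ℂ) (n : ℕ) :
    LowForm 1 (X 1 + ∑ k ∈ Finset.Icc 1 n, C (b k) * X 0 ^ (k + 1)) (X 1) := by
  refine ⟨isHomogeneous_X ℂ 1, ?_⟩
  rw [add_sub_cancel_left]
  refine Ideal.sum_mem _ fun k hk => ?_
  rw [Finset.mem_Icc] at hk
  simpa using mono_mem (b k) (k + 1) 0 2 (by omega)

lemma low_a' (a : ℕ → ℂ) (n : ℕ) (hn : 1 ≤ n) :
    LowForm 0 (X 1 + ∑ k ∈ Finset.Icc 1 n, C (a k) * X 0 ^ (k - 1) * X 1 ^ (k - 1))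
      (C (a 1)) := by
  refine ⟨isHomogeneous_C _ _, ?_⟩
  have := sum_tail n 1 hn (fun k => C (a k) * X 0 ^ (k - 1) * X 1 ^ (k - 1)) (fun k hk =>
    mono_mem (a k) (k - 1) (k - 1) 1 (by omega))
  have h1 := Ideal.add_mem _ (mono_mem 1 0 1 1 (by omega)) this
  simpa [add_sub_assoc] using h1

lemma low_b' (b : ℕ → ℂ) (n : ℕ) (hn : 1 ≤ n) :
    LowForm 1 (X 1 + ∑ k ∈ Finset.Icc 1 n, C (b k) * X 0 ^ k) (X 1 + C (b 1) * X 0) := by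
  refine ⟨lin_homog _, ?_⟩
  have := sum_tail n 2 hn (fun k => C (b k) * X 0 ^ k) (fun k hk => by
    simpa using mono_mem (b k) k 0 2 (by omega))
  simpa using this

lemma low_N (M N : ℕ) (hM : 2 ≤ M) (hN : 2 ≤ N) (a b : ℕ → ℕ → ℂ) :
    LowForm (M + N) (Npoly M N a b)
      (X 0 * X 1 ^ M * ∏ i ∈ Finset.Icc 1 (N - 1), (X 1 + C (a 1 i) * X 0)) := by
  have h0 : LowForm 1 (X 1 + X 0 ^ 2) (X 1) :=
    ⟨isHomogeneous_X ℂ 1, by simpa using mono_mem 1 2 0 2 (by omega)⟩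
  have hA := LowForm.prod 1 (Finset.Icc 1 (N - 1)) _ _ fun i hi =>
    low_a (fun k => a k i) i (Finset.mem_Icc.1 hi).1
  have hB := LowForm.prod 1 (Finset.Icc 1 (M - 2)) _ _ fun i _ =>
    low_b (fun k => b k i) (N - 1 + 2 * i)
  have h := ((((LowForm.of_homog (isHomogeneous_X ℂ 0)).mul
    (LowForm.of_homog (isHomogeneous_X ℂ 1))).mul h0).mul hA).mul hB
  unfold Npoly
  convert h using 1
  · simp only [Nat.card_Icc]
    omega
  · obtain ⟨m, rfl⟩ := Nat.exists_eq_add_of_le hM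
    simp only [Finset.prod_const, Nat.card_Icc]
    have : 2 + m - 2 + 1 - 1 = m := by omega
    rw [this]
    ring

lemma low_T (M N : ℕ) (hM : 2 ≤ M) (hN : 2 ≤ N) (a b : ℕ → ℕ → ℂ) :
    LowForm (M + 1) (Ntilde M N a b)
      (X 0 * X 1 * (X 1 + X 0) * C (∏ j ∈ Finset.Icc 1 (N - 1), a 1 j) *
          ∏ i ∈ Finset.Icc 1 (M - 2), (X 1 + C (b 1 i) * X 0)) := by
  have hA := LowForm.prod 0 (Finset.Icc 1 (N - 1)) _ _ fun i hi =>
    low_a' (fun k => a k i) i (Finset.mem_Icc.1 hi).1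
  have hB := LowForm.prod 1 (Finset.Icc 1 (M - 2)) _ _ fun i hi =>
    low_b' (fun k => b k i) (N - 1 + 2 * i) (by omega)
  have h := ((((LowForm.of_homog (isHomogeneous_X ℂ 0)).mul
    (LowForm.of_homog (isHomogeneous_X ℂ 1))).mul
    (LowForm.of_homog ((isHomogeneous_X ℂ 1).add (isHomogeneous_X ℂ 0)))).mul hA).mul hB
  unfold Ntilde
  convert h using 1
  · simp only [Nat.card_Icc]
    omega
  · rw [map_prod]

/-- The lowest homogeneous component of `N_p` is the component of degree `M+N`, equal to
`x·y^M·∏ (y + a_{1,i} x)`; the lowest homogeneous component of `Ñ_p` (assuming all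
`a_{1,i} ≠ 0`) is the component of degree `M+1`, equal to
`x₁·y₁·(y₁+x₁)·(∏ a_{1,j})·∏ (y₁ + b_{1,i} x₁)`. -/
theorem stmt_11 (M N : ℕ) (hM : 2 ≤ M) (hN : 2 ≤ N) (a b : ℕ → ℕ → ℂ)
    (ha : ∀ i ∈ Finset.Icc 1 (N - 1), a 1 i ≠ 0) :
    ((∀ d, d < M + N → homogeneousComponent d (Npoly M N a b) = 0) ∧
      homogeneousComponent (M + N) (Npoly M N a b) =
        X 0 * X 1 ^ M * ∏ i ∈ Finset.Icc 1 (N - 1), (X 1 + C (a 1 i) * X 0) ∧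
      homogeneousComponent (M + N) (Npoly M N a b) ≠ 0) ∧
    ((∀ d, d < M + 1 → homogeneousComponent d (Ntilde M N a b) = 0) ∧
      homogeneousComponent (M + 1) (Ntilde M N a b) =
        X 0 * X 1 * (X 1 + X 0) * C (∏ j ∈ Finset.Icc 1 (N - 1), a 1 j) *
          ∏ i ∈ Finset.Icc 1 (M - 2), (X 1 + C (b 1 i) * X 0) ∧
      homogeneousComponent (M + 1) (Ntilde M N a b) ≠ 0) := by
  obtain ⟨h1, h2⟩ := (low_N M N hM hN a b).comp
  obtain ⟨h3, h4⟩ := (low_T M N hM hN a b).comp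
  refine ⟨⟨h1, h2, ?_⟩, h3, h4, ?_⟩
  · rw [h2]
    exact mul_ne_zero (mul_ne_zero (X_ne_zero 0) (pow_ne_zero _ (X_ne_zero 1)))
      (Finset.prod_ne_zero_iff.2 fun i _ => lin_ne _)
  · rw [h4]
    refine mul_ne_zero (mul_ne_zero (mul_ne_zero (mul_ne_zero (X_ne_zero 0) (X_ne_zero 1)) ?_) ?_)
      (Finset.prod_ne_zero_iff.2 fun i _ => lin_ne _)
    · simpa using lin_ne 1
    · exact (map_ne_zero_iff _ (C_injective _ _)).2 (Finset.prod_ne_zero_iff.2 ha)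
end

section
/- Let l ≥ 1 and let p, q be parameters (with entries a_{k,i}, b_{k,i} and a′_{k,i}, b′_{k,i} respectively) such that a_{k,i} = a′_{k,i} for all i and all k with 2k−2 ≤ l, and b_{k,i} = b′_{k,i} for all i and all k ≤ l. Define the blown-up polynomials Ñ_p(x₁,y₁) = x₁·y₁·(y₁+x₁)·∏_{i=1}^{N−1}(y₁ + Σ_{k=1}^{i} a_{k,i}·x₁^{k−1}·y₁^{k−1})·∏_{i=1}^{M−2}(y₁ + Σ_{k=1}^{N−1+2i} b_{k,i}·x₁^{k}) and similarly Ñ_q. Then the homogeneous component of total degree M+1+l of Ñ_p − Ñ_q equals x₁^{l+2}·y₁·(y₁+x₁)·(∏_{j=1}^{N−1} a_{1,j})·Σ_i (b_{l+1,i} − b′_{l+1,i})·∏_{j=1, j≠i}^{M−2}(y₁ + b_{1,j}·x₁), where the sum runs over those i with 1 ≤ i ≤ M−2 and l+1 ≤ N−1+2i. -/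
open MvPolynomial

theorem aux_mul_mem {R : Type*} [CommRing R] {I : Ideal R} {p q : R} {m n k : ℕ}
    (hp : p ∈ I ^ m) (hq : q ∈ I ^ n) (h : k ≤ m + n) : p * q ∈ I ^ k := by
  have h1 : p * q ∈ I ^ (m + n) := by
    rw [pow_add]; exact Ideal.mul_mem_mul hp hq
  exact Ideal.pow_le_pow_right h h1

theorem aux_prod_mem {R ι : Type*} [CommRing R] [DecidableEq ι] {I : Ideal R} (S : Finset ι)
    (g : ι → R) (hg : ∀ i ∈ S, g i ∈ I ^ 1) : ∏ i ∈ S, g i ∈ I ^ S.card := by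
  induction S using Finset.induction_on with
  | empty => simp
  | insert a S ha ih =>
    rw [Finset.prod_insert ha, Finset.card_insert_of_notMem ha]
    exact aux_mul_mem (hg a (by simp)) (ih fun i hi => hg i (by simp [hi])) (by omega)

theorem aux_prod_congr {R ι : Type*} [CommRing R] {J : Ideal R} (S : Finset ι)
    (f g : ι → R) (h : ∀ i ∈ S, f i - g i ∈ J) : ∏ i ∈ S, f i - ∏ i ∈ S, g i ∈ J := by
  rw [← Ideal.Quotient.eq, map_prod, map_prod]
  exact Finset.prod_congr rfl fun i hi => Ideal.Quotient.eq.mpr (h i hi)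

theorem aux_prod_lead {R ι : Type*} [CommRing R] [DecidableEq ι] {I : Ideal R} (S : Finset ι)
    (f g : ι → R) (hg : ∀ i ∈ S, g i ∈ I ^ 1) (hf : ∀ i ∈ S, f i ∈ I ^ 1)
    (h : ∀ i ∈ S, f i - g i ∈ I ^ 2) :
    ∏ i ∈ S, f i - ∏ i ∈ S, g i ∈ I ^ (S.card + 1) := by
  induction S using Finset.induction_on with
  | empty => simp
  | insert a S ha ih =>
    rw [Finset.prod_insert ha, Finset.prod_insert ha, Finset.card_insert_of_notMem ha]
    have ih' := ih (fun i hi => hg i (by simp [hi])) (fun i hi => hf i (by simp [hi]))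
      (fun i hi => h i (by simp [hi]))
    have e : f a * ∏ i ∈ S, f i - g a * ∏ i ∈ S, g i =
      f a * (∏ i ∈ S, f i - ∏ i ∈ S, g i) + (f a - g a) * ∏ i ∈ S, g i := by ring
    rw [e]
    exact Ideal.add_mem _ (aux_mul_mem (hf a (by simp)) ih' (by omega))
      (aux_mul_mem (h a (by simp)) (aux_prod_mem S g fun i hi => hg i (by simp [hi])) (by omega))

theorem aux_sum_mem {R ι : Type*} [CommRing R] [DecidableEq ι] {I : Ideal R} (S : Finset ι)
    (g e : ι → R) (l : ℕ) (hg : ∀ i ∈ S, g i ∈ I ^ 1) (he : ∀ i ∈ S, e i ∈ I ^ (l + 1)) :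
    ∑ i ∈ S, e i * ∏ j ∈ S.erase i, g j ∈ I ^ (S.card + l) := by
  refine Ideal.sum_mem _ fun i hi => ?_
  refine aux_mul_mem (he i hi)
    (aux_prod_mem (S.erase i) g fun j hj => hg j (Finset.mem_of_mem_erase hj)) ?_
  rw [Finset.card_erase_of_mem hi]
  have := Finset.card_pos.mpr ⟨i, hi⟩
  omega

theorem aux_prod_diff {R ι : Type*} [CommRing R] [DecidableEq ι] {I : Ideal R} (S : Finset ι)
    (f f' g e : ι → R) (l : ℕ) (hg : ∀ i ∈ S, g i ∈ I ^ 1) (hf : ∀ i ∈ S, f i ∈ I ^ 1)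
    (hf' : ∀ i ∈ S, f' i ∈ I ^ 1) (he : ∀ i ∈ S, e i ∈ I ^ (l + 1))
    (h : ∀ i ∈ S, f i - g i ∈ I ^ 2) (h' : ∀ i ∈ S, f' i - g i ∈ I ^ 2)
    (hd : ∀ i ∈ S, f i - f' i - e i ∈ I ^ (l + 2)) :
    ∏ i ∈ S, f i - ∏ i ∈ S, f' i - ∑ i ∈ S, e i * ∏ j ∈ S.erase i, g j
      ∈ I ^ (S.card + l + 1) := by
  induction S using Finset.induction_on with
  | empty => simp
  | insert a S ha ih =>
    have sub : ∀ {P : ι → Prop}, (∀ i ∈ insert a S, P i) → ∀ i ∈ S, P i :=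
      fun hP i hi => hP i (by simp [hi])
    have ih' := ih (sub hg) (sub hf) (sub hf') (sub he) (sub h) (sub h') (sub hd)
    have hs : ∑ i ∈ S, e i * ∏ j ∈ (insert a S).erase i, g j =
        g a * ∑ i ∈ S, e i * ∏ j ∈ S.erase i, g j := by
      rw [Finset.mul_sum]
      refine Finset.sum_congr rfl fun i hi => ?_
      have hne : a ≠ i := fun hh => ha (hh ▸ hi)
      rw [Finset.erase_insert_of_ne hne, Finset.prod_insert (by simp [ha])]
      ring
    rw [Finset.prod_insert ha, Finset.prod_insert ha, Finset.card_insert_of_notMem ha,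
      Finset.sum_insert ha, hs, Finset.erase_insert ha]
    set F := ∏ i ∈ S, f i
    set F' := ∏ i ∈ S, f' i
    set G := ∏ i ∈ S, g i
    set T := ∑ i ∈ S, e i * ∏ j ∈ S.erase i, g j
    have hT : T ∈ I ^ (S.card + l) := aux_sum_mem S g e l (sub hg) (sub he)
    have hF' : F' ∈ I ^ S.card := aux_prod_mem S f' (sub hf')
    have hFG : F' - G ∈ I ^ (S.card + 1) := aux_prod_lead S f' g (sub hg) (sub hf') (sub h')
    have E : f a * F - f' a * F' - (e a * G + g a * T) =
      f a * (F - F' - T) + (f a - g a) * T + (f a - f' a - e a) * F' + e a * (F' - G) := by ring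
    rw [E]
    have ma : a ∈ insert a S := by simp
    refine Ideal.add_mem _ (Ideal.add_mem _ (Ideal.add_mem _ ?_ ?_) ?_) ?_
    · exact aux_mul_mem (hf a ma) ih' (by omega)
    · exact aux_mul_mem (h a ma) hT (by omega)
    · exact aux_mul_mem (hd a ma) hF' (by omega)
    · exact aux_mul_mem (he a ma) hFG (by omega)

theorem aux_X_mem (i : Fin 2) : (X i : MvPolynomial (Fin 2) ℂ) ∈ idealOfVars (Fin 2) ℂ := by
  exact Ideal.subset_span ⟨i, rfl⟩

theorem aux_Xpow_mem (i : Fin 2) {n k : ℕ} (h : k ≤ n) :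
    (X i ^ n : MvPolynomial (Fin 2) ℂ) ∈ idealOfVars (Fin 2) ℂ ^ k :=
  Ideal.pow_le_pow_right h (Ideal.pow_mem_pow (aux_X_mem i) n)

theorem aux_comp {n : ℕ} {p t : MvPolynomial (Fin 2) ℂ} (ht : t.IsHomogeneous n)
    (h : p - t ∈ idealOfVars (Fin 2) ℂ ^ (n + 1)) : homogeneousComponent n p = t := by
  have h0 : homogeneousComponent n (p - t) = 0 := by
    ext d
    rw [coeff_homogeneousComponent]
    split_ifs with hd
    · rw [(mem_pow_idealOfVars_iff' _ _).mp h d (by omega)]; simp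
    · simp
  rw [map_sub, homogeneousComponent_eq_self ht] at h0
  exact sub_eq_zero.mp h0

/-- Factors of the second product. -/
theorem aux_bfactor_lead (n : ℕ) (hn : 1 ≤ n) (c : ℕ → ℂ) :
    ((X 1 + ∑ k ∈ Finset.Icc 1 n, C (c k) * X 0 ^ k) - (X 1 + C (c 1) * X 0) :
      MvPolynomial (Fin 2) ℂ) ∈ idealOfVars (Fin 2) ℂ ^ 2 := by
  rw [← Finset.add_sum_erase _ _ (Finset.mem_Icc.mpr ⟨le_refl 1, hn⟩)]
  have E : ∀ s : MvPolynomial (Fin 2) ℂ,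
    X 1 + (C (c 1) * X 0 ^ 1 + s) - (X 1 + C (c 1) * X 0) = s := fun s => by ring
  rw [E]
  refine Ideal.sum_mem _ fun k hk => Ideal.mul_mem_left _ _ (aux_Xpow_mem 0 ?_)
  simp at hk; omega

theorem aux_lin_mem (c : ℂ) :
    (X 1 + C c * X 0 : MvPolynomial (Fin 2) ℂ) ∈ idealOfVars (Fin 2) ℂ ^ 1 := by
  rw [pow_one]
  exact Ideal.add_mem _ (aux_X_mem 1) (Ideal.mul_mem_left _ _ (aux_X_mem 0))

theorem aux_bfactor_mem (n : ℕ) (c : ℕ → ℂ) :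
    (X 1 + ∑ k ∈ Finset.Icc 1 n, C (c k) * X 0 ^ k :
      MvPolynomial (Fin 2) ℂ) ∈ idealOfVars (Fin 2) ℂ ^ 1 := by
  refine Ideal.add_mem _ (by rw [pow_one]; exact aux_X_mem 1) ?_
  refine Ideal.sum_mem _ fun k hk => Ideal.mul_mem_left _ _ (aux_Xpow_mem 0 ?_)
  simp at hk; omega

theorem aux_bfactor_diff (n l : ℕ) (c c' : ℕ → ℂ)
    (h : ∀ k ∈ Finset.Icc 1 n, k ≤ l → c k = c' k) :
    ((X 1 + ∑ k ∈ Finset.Icc 1 n, C (c k) * X 0 ^ k)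
      - (X 1 + ∑ k ∈ Finset.Icc 1 n, C (c' k) * X 0 ^ k)
      - (if l + 1 ≤ n then C (c (l + 1) - c' (l + 1)) * X 0 ^ (l + 1) else 0) :
      MvPolynomial (Fin 2) ℂ) ∈ idealOfVars (Fin 2) ℂ ^ (l + 2) := by
  have E : (if l + 1 ≤ n then C (c (l + 1) - c' (l + 1)) * X 0 ^ (l + 1) else 0 :
      MvPolynomial (Fin 2) ℂ) = ∑ k ∈ Finset.Icc 1 n,
        if k = l + 1 then C (c k - c' k) * X 0 ^ k else 0 := by
    rw [Finset.sum_ite_eq']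
    simp
  rw [E, add_sub_add_left_eq_sub, ← Finset.sum_sub_distrib, ← Finset.sum_sub_distrib]
  refine Ideal.sum_mem _ fun k hk => ?_
  split_ifs with hkl
  · simp only [C_sub, sub_mul, sub_self]; exact Ideal.zero_mem _
  · by_cases hk2 : k ≤ l
    · simp [h k hk hk2]
    · rw [sub_zero, ← sub_mul]
      exact Ideal.mul_mem_left _ _ (aux_Xpow_mem 0 (by omega))

theorem aux_XX_mem {k m : ℕ} (h : m ≤ 2 * k - 2) :
    (X 0 ^ (k - 1) * X 1 ^ (k - 1) : MvPolynomial (Fin 2) ℂ) ∈ idealOfVars (Fin 2) ℂ ^ m :=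
  aux_mul_mem (aux_Xpow_mem 0 le_rfl) (aux_Xpow_mem 1 le_rfl) (by omega)

theorem aux_afactor_lead (n : ℕ) (hn : 1 ≤ n) (c : ℕ → ℂ) :
    ((X 1 + ∑ k ∈ Finset.Icc 1 n, C (c k) * X 0 ^ (k - 1) * X 1 ^ (k - 1)) - C (c 1) :
      MvPolynomial (Fin 2) ℂ) ∈ idealOfVars (Fin 2) ℂ ^ 1 := by
  rw [← Finset.add_sum_erase _ _ (Finset.mem_Icc.mpr ⟨le_refl 1, hn⟩)]
  have E : ∀ s : MvPolynomial (Fin 2) ℂ,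
    X 1 + (C (c 1) * X 0 ^ (1 - 1) * X 1 ^ (1 - 1) + s) - C (c 1) = X 1 + s := fun s => by
      simp only [Nat.sub_self, pow_zero]; ring
  rw [E]
  refine Ideal.add_mem _ (by rw [pow_one]; exact aux_X_mem 1) ?_
  refine Ideal.sum_mem _ fun k hk => ?_
  rw [mul_assoc]
  refine Ideal.mul_mem_left _ _ (aux_XX_mem ?_)
  simp at hk; omega

theorem aux_afactor_diff (n l : ℕ) (c c' : ℕ → ℂ)
    (h : ∀ k ∈ Finset.Icc 1 n, 2 * k - 2 ≤ l → c k = c' k) :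
    ((X 1 + ∑ k ∈ Finset.Icc 1 n, C (c k) * X 0 ^ (k - 1) * X 1 ^ (k - 1))
      - (X 1 + ∑ k ∈ Finset.Icc 1 n, C (c' k) * X 0 ^ (k - 1) * X 1 ^ (k - 1)) :
      MvPolynomial (Fin 2) ℂ) ∈ idealOfVars (Fin 2) ℂ ^ (l + 1) := by
  rw [add_sub_add_left_eq_sub, ← Finset.sum_sub_distrib]
  refine Ideal.sum_mem _ fun k hk => ?_
  by_cases hk2 : 2 * k - 2 ≤ l
  · simp [h k hk hk2]
  · rw [mul_assoc, mul_assoc, ← sub_mul]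
    exact Ideal.mul_mem_left _ _ (aux_XX_mem (by omega))

/-- If `a_{k,i} = a'_{k,i}` whenever `2k-2 ≤ l` and `b_{k,i} = b'_{k,i}` whenever `k ≤ l`,
then the homogeneous component of total degree `M+1+l` of `Ñ_p - Ñ_q` is
`x₁^{l+2}·y₁·(y₁+x₁)·(∏ a_{1,j})·Σ_i (b_{l+1,i} - b'_{l+1,i})·∏_{j≠i} (y₁ + b_{1,j} x₁)`,
the sum running over `1 ≤ i ≤ M-2` with `l+1 ≤ N-1+2i`. -/
theorem stmt_13 (M N : ℕ) (hM : 2 ≤ M) (hN : 2 ≤ N) (l : ℕ) (hl : 1 ≤ l)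
    (a b a' b' : ℕ → ℕ → ℂ)
    (ha : ∀ i ∈ Finset.Icc 1 (N - 1), ∀ k ∈ Finset.Icc 1 i, 2 * k - 2 ≤ l → a k i = a' k i)
    (hb : ∀ i ∈ Finset.Icc 1 (M - 2), ∀ k ∈ Finset.Icc 1 (N - 1 + 2 * i), k ≤ l →
      b k i = b' k i) :
    homogeneousComponent (M + 1 + l) (Ntilde M N a b - Ntilde M N a' b') =
      X 0 ^ (l + 2) * X 1 * (X 1 + X 0) * C (∏ j ∈ Finset.Icc 1 (N - 1), a 1 j) *
        ∑ i ∈ (Finset.Icc 1 (M - 2)).filter (fun i => l + 1 ≤ N - 1 + 2 * i),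
          C (b (l + 1) i - b' (l + 1) i) *
            ∏ j ∈ (Finset.Icc 1 (M - 2)).erase i, (X 1 + C (b 1 j) * X 0) := by
  classical
  obtain ⟨m, rfl⟩ : ∃ m, M = m + 2 := ⟨M - 2, by omega⟩
  simp only [Nat.add_sub_cancel] at hb ⊢
  apply aux_comp
  · have hx := isHomogeneous_X ℂ (0 : Fin 2)
    have hy := isHomogeneous_X ℂ (1 : Fin 2)
    have hsum : (∑ i ∈ (Finset.Icc 1 m).filter (fun i => l + 1 ≤ N - 1 + 2 * i),
          C (b (l + 1) i - b' (l + 1) i) *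
            ∏ j ∈ (Finset.Icc 1 m).erase i, (X 1 + C (b 1 j) * X 0) :
          MvPolynomial (Fin 2) ℂ).IsHomogeneous (m - 1) := by
      refine IsHomogeneous.sum _ _ _ fun i hi => ?_
      have hp := IsHomogeneous.prod ((Finset.Icc 1 m).erase i)
        (fun j => (X 1 + C (b 1 j) * X 0 : MvPolynomial (Fin 2) ℂ)) (fun _ => 1)
        (fun j _ => hy.add (isHomogeneous_C_mul_X _ _))
      have := (isHomogeneous_C (Fin 2) (b (l + 1) i - b' (l + 1) i)).mul hp
      convert this using 1
      rw [Finset.sum_const, Finset.card_erase_of_mem (Finset.mem_filter.mp hi).1]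
      simp
    rcases Nat.eq_zero_or_pos m with rfl | hm
    · simp [isHomogeneous_zero]
    have := (((((isHomogeneous_X_pow (R := ℂ) (0 : Fin 2) (l + 2)).mul hy).mul (hy.add hx)).mul
      (isHomogeneous_C (Fin 2) (∏ j ∈ Finset.Icc 1 (N - 1), a 1 j))).mul hsum)
    convert this using 1
    omega
  · unfold Ntilde
    simp only [Nat.add_sub_cancel]
    have hA := aux_prod_congr (J := idealOfVars (Fin 2) ℂ ^ (l + 1)) (Finset.Icc 1 (N - 1)) _ _
      (fun i hi => aux_afactor_diff i l (fun k => a k i) (fun k => a' k i) (ha i hi))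
    have hA1 := aux_prod_congr (J := idealOfVars (Fin 2) ℂ ^ 1) (Finset.Icc 1 (N - 1)) _ _
      (fun i hi => aux_afactor_lead i (Finset.mem_Icc.mp hi).1 (fun k => a k i))
    have hB' := aux_prod_mem (I := idealOfVars (Fin 2) ℂ) (Finset.Icc 1 m) _
      (fun i _ => aux_bfactor_mem (N - 1 + 2 * i) (fun k => b' k i))
    have he : ∀ i ∈ Finset.Icc 1 m, (if l + 1 ≤ N - 1 + 2 * i then
        C (b (l + 1) i - b' (l + 1) i) * X 0 ^ (l + 1) else 0 : MvPolynomial (Fin 2) ℂ) ∈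
        idealOfVars (Fin 2) ℂ ^ (l + 1) := by
      intro i _
      split_ifs
      · exact Ideal.mul_mem_left _ _ (aux_Xpow_mem 0 le_rfl)
      · exact Ideal.zero_mem _
    have hT := aux_sum_mem (I := idealOfVars (Fin 2) ℂ) (Finset.Icc 1 m) _ _ l
      (fun i _ => aux_lin_mem (b 1 i)) he
    have hB := aux_prod_diff (I := idealOfVars (Fin 2) ℂ) (Finset.Icc 1 m) _ _ _ _ l
      (fun i _ => aux_lin_mem (b 1 i))
      (fun i _ => aux_bfactor_mem (N - 1 + 2 * i) (fun k => b k i))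
      (fun i _ => aux_bfactor_mem (N - 1 + 2 * i) (fun k => b' k i)) he
      (fun i _ => aux_bfactor_lead (N - 1 + 2 * i) (by omega) (fun k => b k i))
      (fun i hi => by
        rw [hb i hi 1 (Finset.mem_Icc.mpr ⟨le_rfl, by omega⟩) hl]
        exact aux_bfactor_lead (N - 1 + 2 * i) (by omega) (fun k => b' k i))
      (fun i hi => aux_bfactor_diff (N - 1 + 2 * i) l (fun k => b k i) (fun k => b' k i) (hb i hi))
    rw [← map_prod] at hA1
    have hTe : (∑ i ∈ Finset.Icc 1 m, (if l + 1 ≤ N - 1 + 2 * i then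
        C (b (l + 1) i - b' (l + 1) i) * X 0 ^ (l + 1) else 0) *
          ∏ j ∈ (Finset.Icc 1 m).erase i, (X 1 + C (b 1 j) * X 0) : MvPolynomial (Fin 2) ℂ) =
        X 0 ^ (l + 1) * ∑ i ∈ (Finset.Icc 1 m).filter (fun i => l + 1 ≤ N - 1 + 2 * i),
          C (b (l + 1) i - b' (l + 1) i) *
            ∏ j ∈ (Finset.Icc 1 m).erase i, (X 1 + C (b 1 j) * X 0) := by
      rw [Finset.sum_filter, Finset.mul_sum]
      refine Finset.sum_congr rfl fun i _ => ?_
      split_ifs <;> ring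
    rw [hTe] at hT hB
    simp only [Nat.card_Icc, Nat.add_sub_cancel] at hB' hT hB
    have hP : (X 0 * X 1 * (X 1 + X 0) : MvPolynomial (Fin 2) ℂ) ∈ idealOfVars (Fin 2) ℂ ^ 3 := by
      have hx : (X 0 : MvPolynomial (Fin 2) ℂ) ∈ idealOfVars (Fin 2) ℂ ^ 1 := by
        rw [pow_one]; exact aux_X_mem 0
      have hy : (X 1 : MvPolynomial (Fin 2) ℂ) ∈ idealOfVars (Fin 2) ℂ ^ 1 := by
        rw [pow_one]; exact aux_X_mem 1
      exact aux_mul_mem (m := 2) (aux_mul_mem hx hy (by omega)) (Ideal.add_mem _ hy hx) (by omega)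
    generalize (∏ i ∈ Finset.Icc 1 (N - 1), (X 1 + ∑ k ∈ Finset.Icc 1 i,
      C (a k i) * X 0 ^ (k - 1) * X 1 ^ (k - 1)) : MvPolynomial (Fin 2) ℂ) = A at *
    generalize (∏ i ∈ Finset.Icc 1 (N - 1), (X 1 + ∑ k ∈ Finset.Icc 1 i,
      C (a' k i) * X 0 ^ (k - 1) * X 1 ^ (k - 1)) : MvPolynomial (Fin 2) ℂ) = A' at *
    generalize (∏ i ∈ Finset.Icc 1 m, (X 1 + ∑ k ∈ Finset.Icc 1 (N - 1 + 2 * i),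
      C (b k i) * X 0 ^ k) : MvPolynomial (Fin 2) ℂ) = B at *
    generalize (∏ i ∈ Finset.Icc 1 m, (X 1 + ∑ k ∈ Finset.Icc 1 (N - 1 + 2 * i),
      C (b' k i) * X 0 ^ k) : MvPolynomial (Fin 2) ℂ) = B' at *
    generalize (∑ i ∈ (Finset.Icc 1 m).filter (fun i => l + 1 ≤ N - 1 + 2 * i),
          C (b (l + 1) i - b' (l + 1) i) *
            ∏ j ∈ (Finset.Icc 1 m).erase i, (X 1 + C (b 1 j) * X 0) :
            MvPolynomial (Fin 2) ℂ) = T at *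
    generalize (C (∏ j ∈ Finset.Icc 1 (N - 1), a 1 j) : MvPolynomial (Fin 2) ℂ) = c at *
    have E : X 0 * X 1 * (X 1 + X 0) * A * B - X 0 * X 1 * (X 1 + X 0) * A' * B' -
        X 0 ^ (l + 2) * X 1 * (X 1 + X 0) * c * T =
        X 0 * X 1 * (X 1 + X 0) * (A * (B - B' - X 0 ^ (l + 1) * T) +
          (A - c) * (X 0 ^ (l + 1) * T) + (A - A') * B') := by ring
    rw [E]
    refine aux_mul_mem (n := m + l + 1) hP ?_ (by omega)
    refine Ideal.add_mem _ (Ideal.add_mem _ (Ideal.mul_mem_left _ _ hB) ?_) ?_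
    · exact aux_mul_mem hA1 hT (by omega)
    · exact aux_mul_mem hA hB' (by omega)
end
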